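/- arXiv:1911.06170 — 2 statements merged into one kernel-verified Lean document; each statement's English description precedes it below -/
import Mathlib

section
/- Let x ∈ X_F and let a ≥ 1 be an integer. If 1 0^a 1 0^{a+1} 1 or 1 0^{a+1} 1 0^a 1 is a factor of x, then x is a bi-infinite concatenation of the two blocks 1 0^a and 1 0^{a+1}, i.e. x ∈ (1(0^a + 0^{a+1}))^ℤ. -/
/-- `u` occurs as a block of consecutive letters of the bi-infinite word `x : ℤ → Bool`. -/
def IsFactorZ (u : List Bool) (x : ℤ → Bool) : Prop :=
  ∃ i : ℤ, ∀ k : ℕ, k < u.length → x (i + k) = u.getD k false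

/-- `u` occurs as a block of consecutive letters of the right-infinite word `y : ℕ → Bool`. -/
def IsFactorN (u : List Bool) (y : ℕ → Bool) : Prop :=
  ∃ i : ℕ, ∀ k : ℕ, k < u.length → y (i + k) = u.getD k false

/-- The forbidden word `0v01ṽ1` (with `0 = false`, `1 = true`). -/
def forbidden1 (v : List Bool) : List Bool :=
  [false] ++ v ++ [false, true] ++ v.reverse ++ [true]

/-- The forbidden word `1v10ṽ0` (with `0 = false`, `1 = true`). -/
def forbidden2 (v : List Bool) : List Bool :=
  [true] ++ v ++ [true, false] ++ v.reverse ++ [false]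

/-- Membership in the subshift `X_F`: no factor of `x` lies in `F`. -/
def memXF (x : ℤ → Bool) : Prop :=
  ∀ v : List Bool, ¬ IsFactorZ (forbidden1 v) x ∧ ¬ IsFactorZ (forbidden2 v) x

/-- Membership in the one-sided subshift `Y_F`: no factor of `y` lies in `F`. -/
def memYF (y : ℕ → Bool) : Prop :=
  ∀ v : List Bool, ¬ IsFactorN (forbidden1 v) y ∧ ¬ IsFactorN (forbidden2 v) y

/-- A finite word is balanced if any two factors of equal length have numbers of
occurrences of `1` differing by at most one. -/
def BalancedL (w : List Bool) : Prop :=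
  ∀ u v : List Bool, u <:+: w → v <:+: w → u.length = v.length →
    |(u.count true : ℤ) - (v.count true : ℤ)| ≤ 1

/-- A right-infinite word is balanced if any two factors of equal length have numbers of
occurrences of `1` differing by at most one. -/
def BalancedN (y : ℕ → Bool) : Prop :=
  ∀ u v : List Bool, IsFactorN u y → IsFactorN v y → u.length = v.length →
    |(u.count true : ℤ) - (v.count true : ℤ)| ≤ 1

/-- A bi-infinite word is balanced if any two factors of equal length have numbers of
occurrences of `1` differing by at most one. -/
def BalancedZ (x : ℤ → Bool) : Prop :=
  ∀ u v : List Bool, IsFactorZ u x → IsFactorZ v x → u.length = v.length →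
    |(u.count true : ℤ) - (v.count true : ℤ)| ≤ 1

/-!
A word avoids `F` iff, around every factor `10`, the left part read backwards is lexicographically
at most the right part, and around every factor `01` it is at least the right part. A word with this
property and at least two `1`s has infinitely many on either side, and the sequence `d : ℤ → ℤ` of
distances between consecutive `1`s inherits the property; moreover, neighbouring terms of `d` differ
by at most one.

Hence any two terms of `d` differ by at most one. Otherwise choose `d i` and `d (i + n)` differing
by at least two with `n` minimal, say `d i + 2 ≤ d (i + n)`. By minimality all terms strictly
between them equal `d i + 1`. Around the ascent from `d i` to `d (i + 1)` the left part therefore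
reads `d i + 1, d i + 1, …` until it exceeds `d i + 1`, at the latest at the mirror image of
`i + n`. But that is a term differing from `d i` by at least two at distance less than `n`.
-/

/-- The condition that around every descent `x (i + 1) < x i` the left part read backwards is
lexicographically at most the right part, and around every ascent at least the right part, each
comparison being spelled out at the first index `n` where the two parts may differ. -/
structure MirrorOrdered {α : Type*} [Preorder α] (x : ℤ → α) : Prop where
  le_of_descent : ∀ (i : ℤ) (n : ℕ), x (i + 1) < x i →
    (∀ k < n, x (i - 1 - k) = x (i + 2 + k)) → x (i - 1 - n) ≤ x (i + 2 + n)
  le_of_ascent : ∀ (i : ℤ) (n : ℕ), x i < x (i + 1) →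
    (∀ k < n, x (i - 1 - k) = x (i + 2 + k)) → x (i + 2 + n) ≤ x (i - 1 - n)

namespace MirrorOrdered

theorem reflect {α : Type*} [Preorder α] {x : ℤ → α} (hx : MirrorOrdered x) :
    MirrorOrdered fun k => x (-k) := by
  have left_eq (i : ℤ) (k : ℕ) : -(i - 1 - k) = -(i + 1) + 2 + k := by ring
  have right_eq (i : ℤ) (k : ℕ) : -(i + 2 + k) = -(i + 1) - 1 - k := by ring
  have center_eq (i : ℤ) : -i = -(i + 1) + 1 := by ring
  constructor <;> intro i n hlt hmirror <;> simp only [left_eq, right_eq] at hmirror ⊢ <;>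
    rw [center_eq i] at hlt
  · exact hx.le_of_ascent _ n hlt fun k hk => (hmirror k hk).symm
  · exact hx.le_of_descent _ n hlt fun k hk => (hmirror k hk).symm

theorem neg {α : Type*} [AddCommGroup α] [PartialOrder α] [IsOrderedAddMonoid α] {x : ℤ → α}
    (hx : MirrorOrdered x) : MirrorOrdered (-x) where
  le_of_descent i n hlt hmirror := neg_le_neg <|
    hx.le_of_ascent i n (neg_lt_neg_iff.1 hlt) fun k hk => neg_injective (hmirror k hk)
  le_of_ascent i n hlt hmirror := neg_le_neg <|
    hx.le_of_descent i n (neg_lt_neg_iff.1 hlt) fun k hk => neg_injective (hmirror k hk)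

theorem apply_add_le_add_one {d : ℤ → ℤ} (hd : MirrorOrdered d) {n : ℕ}
    (hnear : ∀ m < n + 2, ∀ i : ℤ, |d (i + m) - d i| ≤ 1) (i : ℤ) :
    d (i + (n + 2 : ℕ)) ≤ d i + 1 := by
  by_contra! hfar
  have hbetween (k : ℕ) (hpos : 0 < k) (hk : k < n + 2) : d (i + k) = d i + 1 := by
    have hleft := abs_le.1 (hnear k hk i)
    have hright := abs_le.1 (hnear (n + 2 - k) (by omega) (i + k))
    rw [show i + k + (n + 2 - k : ℕ) = i + (n + 2 : ℕ) by omega] at hright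
    omega
  have hascent : d i < d (i + 1) := by
    have := hbetween 1 one_pos (by omega)
    push_cast at this
    omega
  have hleft_le (k : ℕ) (hk : k ≤ n) : d (i - 1 - k) ≤ d i + 1 := by
    have := abs_le.1 (hnear (k + 1) (by omega) (i - 1 - k))
    rw [show i - 1 - k + (k + 1 : ℕ) = i by push_cast; ring] at this
    omega
  have hmirror (k : ℕ) (hk : k < n) : d (i - 1 - k) = d (i + 2 + k) := by
    induction k using Nat.strong_induction_on with
    | _ k ih =>
      have hge := hd.le_of_ascent i k hascent fun l hl => ih l hl (hl.trans hk)
      have hright := hbetween (k + 2) (by omega) (by omega)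
      rw [show i + (k + 2 : ℕ) = i + 2 + k by push_cast; ring] at hright
      exact le_antisymm (hright ▸ hleft_le k hk.le) hge
  have hge := hd.le_of_ascent i n hascent hmirror
  rw [show i + 2 + n = i + (n + 2 : ℕ) by push_cast; ring] at hge
  have := hleft_le n le_rfl
  omega

theorem abs_sub_le_one {d : ℤ → ℤ} (hd : MirrorOrdered d)
    (hstep : ∀ i, |d (i + 1) - d i| ≤ 1) (i j : ℤ) : |d i - d j| ≤ 1 := by
  have hnear (n : ℕ) : ∀ i : ℤ, |d (i + n) - d i| ≤ 1 := by
    induction n using Nat.strong_induction_on with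
    | _ n ih =>
      match n with
      | 0 => simp
      | 1 => exact_mod_cast hstep
      | n + 2 =>
        intro i
        have hle := hd.apply_add_le_add_one ih i
        have hge := hd.neg.apply_add_le_add_one (n := n)
          (fun m hm i => by simpa [abs_sub_comm, neg_add_eq_sub] using ih m hm i) i
        simp only [Pi.neg_apply] at hge
        exact abs_le.2 ⟨by omega, by omega⟩
  rcases le_total j i with hji | hij
  · simpa [hji] using hnear (i - j).toNat j
  · simpa [hij, abs_sub_comm] using hnear (j - i).toNat i

theorem exists_gt_eq_true {x : ℤ → Bool} (hx : MirrorOrdered x) {p q : ℤ} (hqp : q < p)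
    (hq : x q = true) (hp : x p = true) : ∃ r, p < r ∧ x r = true := by
  by_contra! hzero
  simp only [ne_eq, Bool.not_eq_true] at hzero
  have hone_left : ∃ n : ℕ, x (p - 1 - n) = true :=
    ⟨(p - 1 - q).toNat, by rwa [show p - 1 - (p - 1 - q).toNat = q by omega]⟩
  have hdescent : x (p + 1) < x p := Bool.lt_iff.2 ⟨hzero _ (by omega), hp⟩
  have hle := hx.le_of_descent p (Nat.find hone_left) hdescent fun k hk => by
    rw [hzero (p + 2 + k) (by omega)]
    exact Bool.eq_false_iff.2 (Nat.find_min hone_left hk)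
  rw [Nat.find_spec hone_left, hzero _ (by omega)] at hle
  exact absurd hle (by decide)

theorem exists_lt_eq_true {x : ℤ → Bool} (hx : MirrorOrdered x) {p q : ℤ} (hpq : p < q)
    (hp : x p = true) (hq : x q = true) : ∃ r, r < p ∧ x r = true := by
  obtain ⟨r, hr, hxr⟩ := hx.reflect.exists_gt_eq_true (neg_lt_neg hpq)
    (by rwa [neg_neg]) (by rwa [neg_neg])
  exact ⟨-r, by omega, hxr⟩

end MirrorOrdered

/-- `t` lists the positions of the letter `1` of the bi-infinite word `x` in increasing order. -/
structure EnumeratesOnes (t : ℤ → ℤ) (x : ℤ → Bool) : Prop where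
  strictMono : StrictMono t
  eq_true_iff : ∀ k, x k = true ↔ k ∈ Set.range t

theorem MirrorOrdered.exists_enumeratesOnes {x : ℤ → Bool} (hx : MirrorOrdered x)
    (hones : {k | x k = true}.Nontrivial) : ∃ t, EnumeratesOnes t x := by
  let S := {k : ℤ | x k = true}
  have : Nonempty S := hones.nonempty.to_subtype
  have : NoMaxOrder S := ⟨fun ⟨p, hp⟩ => by
    obtain ⟨q, hq, hne⟩ := hones.exists_ne p
    rcases hne.lt_or_gt with hqp | hpq
    · obtain ⟨r, hpr, hr⟩ := hx.exists_gt_eq_true hqp hq hp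
      exact ⟨⟨r, hr⟩, hpr⟩
    · exact ⟨⟨q, hq⟩, hpq⟩⟩
  have : NoMinOrder S := ⟨fun ⟨p, hp⟩ => by
    obtain ⟨q, hq, hne⟩ := hones.exists_ne p
    rcases hne.lt_or_gt with hqp | hpq
    · exact ⟨⟨q, hq⟩, hqp⟩
    · obtain ⟨r, hrp, hr⟩ := hx.exists_lt_eq_true hpq hp hq
      exact ⟨⟨r, hr⟩, hrp⟩⟩
  let : DecidablePred (· ∈ S) := Classical.decPred _
  let := LinearLocallyFiniteOrder.succOrder S
  let := LinearLocallyFiniteOrder.predOrder S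
  let e : ℤ ≃o S := orderIsoIntOfLinearSuccPredArch.symm
  refine ⟨fun m => e m, fun _ _ hlt => e.strictMono hlt, fun k => ⟨fun hk => ?_, ?_⟩⟩
  · exact ⟨e.symm ⟨k, hk⟩, by simp⟩
  · rintro ⟨m, rfl⟩
    exact (e m).2

namespace EnumeratesOnes

variable {t : ℤ → ℤ} {x : ℤ → Bool}

theorem apply_eq_true (ht : EnumeratesOnes t x) (m : ℤ) : x (t m) = true :=
  (ht.eq_true_iff _).2 ⟨m, rfl⟩

theorem exists_mem_Ioo (ht : EnumeratesOnes t x) {k m m' : ℤ} (hk : x k = true) (hmk : t m < k)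
    (hkm' : k < t m') : ∃ n ∈ Set.Ioo m m', t n = k := by
  obtain ⟨n, rfl⟩ := (ht.eq_true_iff k).1 hk
  exact ⟨n, ⟨ht.strictMono.lt_iff_lt.1 hmk, ht.strictMono.lt_iff_lt.1 hkm'⟩, rfl⟩

theorem eq_false_of_mem_gap (ht : EnumeratesOnes t x) {k m : ℤ} (hmk : t m < k)
    (hkm : k < t (m + 1)) : x k = false := by
  by_contra hk
  obtain ⟨n, ⟨hmn, hnm⟩, -⟩ := ht.exists_mem_Ioo (Bool.eq_true_of_not_eq_false hk) hmk hkm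
  omega

theorem reflect (ht : EnumeratesOnes t x) :
    EnumeratesOnes (fun m => -t (-m)) fun k => x (-k) where
  strictMono _ _ hlt := neg_lt_neg (ht.strictMono (neg_lt_neg hlt))
  eq_true_iff k := by
    rw [ht.eq_true_iff]
    constructor <;> rintro ⟨m, hm⟩ <;> exact ⟨-m, by simp only [neg_neg] at *; omega⟩

theorem apply_eq_apply_mirror (ht : EnumeratesOnes t x) {m c : ℤ} {n : ℕ}
    (hmirror : ∀ j < n, t (m - j) + t (m + 2 + j) = c) (hlt : c < t (m - n) + t (m + 2 + n))
    {q : ℤ} (hnq : t (m - n) < q) (hq : q < t (m + 1)) (hcq : t (m + 1) < c - q) :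
    x q = x (c - q) := by
  rw [Bool.eq_iff_iff]
  constructor <;> intro hone
  · obtain ⟨l, ⟨hl, hl'⟩, rfl⟩ := ht.exists_mem_Ioo hone hnq hq
    have hsum := hmirror (m - l).toNat (by omega)
    rw [show m - (m - l).toNat = l by omega] at hsum
    rw [← eq_sub_iff_add_eq'.2 hsum]
    exact ht.apply_eq_true _
  · obtain ⟨l, ⟨hl, hl'⟩, hlq⟩ :=
      ht.exists_mem_Ioo hone hcq (show c - q < t (m + 2 + n) by omega)
    have hsum := hmirror (l - (m + 2)).toNat (by omega)
    rw [show m + 2 + (l - (m + 2)).toNat = l by omega] at hsum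
    rw [show q = t (m - (l - (m + 2)).toNat) by omega]
    exact ht.apply_eq_true _

theorem apply_add_one_eq_false (ht : EnumeratesOnes t x) {m : ℤ}
    (hle : 2 * t (m + 1) + 1 ≤ t m + t (m + 2)) : x (t (m + 1) + 1) = false := by
  have : t m < t (m + 1) := ht.strictMono (lt_add_one m)
  refine ht.eq_false_of_mem_gap (lt_add_one _) ?_
  rw [show m + 1 + 1 = m + 2 by ring]
  omega

/-- Positions that are mirror images in the centre of a factor `10` starting at `p` have sum
`2 * p + 1`; here `p = t (m + 1)`. -/
theorem add_le_of_forall_add_eq (ht : EnumeratesOnes t x) (hx : MirrorOrdered x) {m : ℤ} {n : ℕ}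
    (hmirror : ∀ j < n, t (m - j) + t (m + 2 + j) = 2 * t (m + 1) + 1) :
    t (m - n) + t (m + 2 + n) ≤ 2 * t (m + 1) + 1 := by
  by_contra! hlt
  have hleft : t (m - n) < t (m + 1) := ht.strictMono (by omega)
  have hlast : t (m + 1 + n) < 2 * t (m + 1) + 1 - t (m - n) := by
    rcases n with _ | n
    · simp only [Nat.cast_zero, add_zero] at hleft ⊢
      omega
    · have hsum := hmirror n n.lt_succ_self
      have : t (m - (n + 1 : ℕ)) < t (m - n) := ht.strictMono (by omega)
      rw [show m + 1 + (n + 1 : ℕ) = m + 2 + n by omega]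
      omega
  have hzero : x (2 * t (m + 1) + 1 - t (m - n)) = false :=
    ht.eq_false_of_mem_gap hlast (by rw [show m + 1 + n + 1 = m + 2 + n by ring]; omega)
  have hdescent : x (t (m + 1) + 1) < x (t (m + 1)) := by
    refine Bool.lt_iff.2 ⟨ht.apply_add_one_eq_false ?_, ht.apply_eq_true _⟩
    rcases n.eq_zero_or_pos with rfl | hpos
    · simpa using hlt.le
    · simpa using (hmirror 0 hpos).ge
  have hle := hx.le_of_descent (t (m + 1)) (t (m + 1) - 1 - t (m - n)).toNat hdescent
    fun k hk => by
      rw [ht.apply_eq_apply_mirror hmirror hlt (by omega) (by omega) (by omega)]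
      congr 1
      ring
  rw [show t (m + 1) - 1 - (t (m + 1) - 1 - t (m - n)).toNat = t (m - n) by omega,
    show t (m + 1) + 2 + (t (m + 1) - 1 - t (m - n)).toNat = 2 * t (m + 1) + 1 - t (m - n) by omega,
    ht.apply_eq_true, hzero] at hle
  exact absurd hle (by decide)

theorem le_add_of_forall_add_eq (ht : EnumeratesOnes t x) (hx : MirrorOrdered x) {m : ℤ} {n : ℕ}
    (hmirror : ∀ j < n, t (m - j) + t (m + 2 + j) = 2 * t (m + 1) - 1) :
    2 * t (m + 1) - 1 ≤ t (m - n) + t (m + 2 + n) := by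
  have left_eq (j : ℕ) : -(-(m + 2) - (j : ℤ)) = m + 2 + j := by ring
  have right_eq (j : ℕ) : -(-(m + 2) + 2 + (j : ℤ)) = m - j := by ring
  have center_eq : -(-(m + 2) + 1) = m + 1 := by ring
  have hle := ht.reflect.add_le_of_forall_add_eq hx.reflect (m := -(m + 2)) (n := n) fun j hj => by
    simp only [left_eq, right_eq, center_eq]
    linarith [hmirror j hj]
  simp only [left_eq, right_eq, center_eq] at hle
  linarith

end EnumeratesOnes

/-- The distance between the `m`-th and the next `1`; a block `10ᵇ` has distance `b + 1`. -/
def gap (t : ℤ → ℤ) (m : ℤ) : ℤ := t (m + 1) - t m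

theorem mirror_add_succ (t : ℤ → ℤ) (m : ℤ) (n : ℕ) :
    t (m - (n + 1 : ℕ)) + t (m + 2 + (n + 1 : ℕ)) =
      t (m - n) + t (m + 2 + n) + (gap t (m + 2 + n) - gap t (m - 1 - n)) := by
  rw [gap, gap, show m - (n + 1 : ℕ) = m - 1 - n by push_cast; ring,
    show m + 2 + (n + 1 : ℕ) = m + 2 + n + 1 by push_cast; ring,
    show m - 1 - n + 1 = m - (n : ℤ) by ring]
  ring

theorem mirror_add_eq_of_gap_eq {t : ℤ → ℤ} {m : ℤ} {n : ℕ}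
    (hgap : ∀ k < n, gap t (m - 1 - k) = gap t (m + 2 + k)) :
    ∀ j ≤ n, t (m - j) + t (m + 2 + j) = t m + t (m + 2) := by
  intro j hj
  induction j with
  | zero => simp
  | succ j ih => rw [mirror_add_succ, ih (by omega), hgap j hj, sub_self, add_zero]

theorem gap_succ_sub_gap (t : ℤ → ℤ) (m : ℤ) :
    gap t (m + 1) - gap t m = t m + t (m + 2) - 2 * t (m + 1) := by
  rw [gap, gap, show m + 1 + 1 = m + 2 by ring]
  ring

namespace EnumeratesOnes

variable {t : ℤ → ℤ} {x : ℤ → Bool}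

theorem abs_gap_succ_sub_gap_le_one (ht : EnumeratesOnes t x) (hx : MirrorOrdered x) (m : ℤ) :
    |gap t (m + 1) - gap t m| ≤ 1 := by
  have hle := ht.add_le_of_forall_add_eq hx (m := m) (n := 0) (by simp)
  have hge := ht.le_add_of_forall_add_eq hx (m := m) (n := 0) (by simp)
  simp only [Nat.cast_zero, sub_zero, add_zero] at hle hge
  rw [abs_le, gap_succ_sub_gap]
  omega

theorem mirrorOrdered_gap (ht : EnumeratesOnes t x) (hx : MirrorOrdered x) :
    MirrorOrdered (gap t) := by
  have hstep (m : ℤ) := abs_le.1 (ht.abs_gap_succ_sub_gap_le_one hx m)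
  constructor <;> intro m n hlt hgap <;> have hcenter := gap_succ_sub_gap t m <;>
    have hsum := mirror_add_eq_of_gap_eq hgap
  · have hdescent : t m + t (m + 2) = 2 * t (m + 1) - 1 := by linarith [hstep m]
    have hge := ht.le_add_of_forall_add_eq hx (n := n + 1) fun j hj =>
      (hsum j (Nat.le_of_lt_succ hj)).trans hdescent
    linarith [mirror_add_succ t m n, hsum n le_rfl]
  · have hascent : t m + t (m + 2) = 2 * t (m + 1) + 1 := by linarith [hstep m]
    have hle := ht.add_le_of_forall_add_eq hx (n := n + 1) fun j hj =>
      (hsum j (Nat.le_of_lt_succ hj)).trans hascent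
    linarith [mirror_add_succ t m n, hsum n le_rfl]

theorem exists_gap_eq (ht : EnumeratesOnes t x) {p q : ℤ} (hpq : p < q) (hp : x p = true)
    (hq : x q = true) (hzero : ∀ k, p < k → k < q → x k = false) : ∃ m, gap t m = q - p := by
  obtain ⟨m, rfl⟩ := (ht.eq_true_iff p).1 hp
  obtain ⟨l, rfl⟩ := (ht.eq_true_iff q).1 hq
  have hle : m + 1 ≤ l := ht.strictMono.lt_iff_lt.1 hpq
  rcases hle.eq_or_lt with rfl | hlt
  · exact ⟨m, rfl⟩
  · have := hzero (t (m + 1)) (ht.strictMono (lt_add_one m)) (ht.strictMono hlt)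
    simp [ht.apply_eq_true] at this

end EnumeratesOnes

/-- The word `u` occurs in `x` starting at position `i`; this is the body of `IsFactorZ`. -/
def OccursAt (u : List Bool) (x : ℤ → Bool) (i : ℤ) : Prop :=
  ∀ k : ℕ, k < u.length → x (i + k) = u.getD k false

section OccursAt

variable {u w : List Bool} {x : ℤ → Bool} {i : ℤ} {b : Bool}

theorem occursAt_append :
    OccursAt (u ++ w) x i ↔ OccursAt u x i ∧ OccursAt w x (i + u.length) := by
  refine ⟨fun h => ⟨fun k hk => ?_, fun k hk => ?_⟩, fun ⟨hu, hw⟩ k hk => ?_⟩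
  · rw [h k (by rw [List.length_append]; omega), List.getD_append _ _ _ _ hk]
  · have hxk := h (u.length + k) (by rw [List.length_append]; omega)
    rwa [List.getD_append_right _ _ _ _ (by omega), Nat.add_sub_cancel_left, Nat.cast_add,
      ← add_assoc] at hxk
  · rcases lt_or_ge k u.length with hku | huk
    · rw [hu k hku, List.getD_append _ _ _ _ hku]
    · rw [List.length_append] at hk
      rw [List.getD_append_right _ _ _ _ huk, ← hw (k - u.length) (by omega)]
      congr 1
      omega

theorem occursAt_singleton : OccursAt [b] x i ↔ x i = b := by
  simp [OccursAt]

theorem occursAt_replicate {n : ℕ} :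
    OccursAt (List.replicate n b) x i ↔ ∀ k < n, x (i + k) = b := by
  simp +contextual [OccursAt]

theorem occursAt_ofFn {n : ℕ} {f : Fin n → Bool} :
    OccursAt (List.ofFn f) x i ↔ ∀ k : Fin n, x (i + k) = f k := by
  simp +contextual [OccursAt, Fin.forall_iff]

end OccursAt

theorem IsFactorZ.of_isInfix {u w : List Bool} {x : ℤ → Bool} (huw : u <:+: w)
    (hw : IsFactorZ w x) : IsFactorZ u x := by
  obtain ⟨s, r, rfl⟩ := huw
  obtain ⟨i, hi⟩ := hw
  exact ⟨_, (occursAt_append.1 (occursAt_append.1 hi).1).2⟩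

theorem exists_isFactorZ_of_mirror {x : ℤ → Bool} {i : ℤ} {n : ℕ} {b c : Bool}
    (hi : x i = b) (hi' : x (i + 1) = c) (hmirror : ∀ k < n, x (i - 1 - k) = x (i + 2 + k))
    (hleft : x (i - 1 - n) = b) (hright : x (i + 2 + n) = c) :
    ∃ v : List Bool, IsFactorZ ([b] ++ v ++ [b, c] ++ v.reverse ++ [c]) x := by
  let v := List.ofFn fun k : Fin n => x (i - n + k)
  have hv : OccursAt v x (i - n) := occursAt_ofFn.2 fun _ => rfl
  have hv_reverse : OccursAt v.reverse x (i + 2) := by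
    intro k hk
    simp only [v, List.length_reverse, List.length_ofFn] at hk
    rw [List.getD_eq_getElem _ _ (by simpa [v] using hk)]
    simp only [v, List.getElem_reverse, List.getElem_ofFn, List.length_ofFn, ← hmirror k hk]
    congr 1
    omega
  refine ⟨v, i - 1 - n, ?_⟩
  change OccursAt _ x _
  rw [show [b, c] = [b] ++ [c] from rfl]
  simp only [← List.append_assoc, occursAt_append, occursAt_singleton, List.length_append,
    List.length_reverse, List.length_singleton, v, List.length_ofFn]
  refine ⟨⟨⟨⟨⟨hleft, ?_⟩, ?_⟩, ?_⟩, ?_⟩, ?_⟩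
  · convert hv using 1; push_cast; ring
  · convert hi using 2; push_cast; ring
  · convert hi' using 2; push_cast; ring
  · convert hv_reverse using 1; push_cast; ring
  · convert hright using 2; push_cast; ring

theorem memXF.mirrorOrdered {x : ℤ → Bool} (hx : memXF x) : MirrorOrdered x where
  le_of_descent i n hlt hmirror := by
    obtain ⟨hi', hi⟩ := Bool.lt_iff.1 hlt
    by_contra hle
    obtain ⟨hright, hleft⟩ := Bool.lt_iff.1 (not_le.1 hle)
    obtain ⟨v, hv⟩ := exists_isFactorZ_of_mirror hi hi' hmirror hleft hright
    exact (hx v).2 hv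
  le_of_ascent i n hlt hmirror := by
    obtain ⟨hi, hi'⟩ := Bool.lt_iff.1 hlt
    by_contra hle
    obtain ⟨hleft, hright⟩ := Bool.lt_iff.1 (not_le.1 hle)
    obtain ⟨v, hv⟩ := exists_isFactorZ_of_mirror hi hi' hmirror hleft hright
    exact (hx v).1 hv

theorem IsFactorZ.exists_consecutive_ones {x : ℤ → Bool} {b : ℕ}
    (h : IsFactorZ ([true] ++ List.replicate b false ++ [true]) x) :
    ∃ p, x p = true ∧ x (p + (b + 1)) = true ∧ ∀ k, p < k → k < p + (b + 1) → x k = false := by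
  obtain ⟨p, hp⟩ := h
  change OccursAt _ x p at hp
  simp only [occursAt_append, occursAt_singleton, occursAt_replicate, List.length_append,
    List.length_replicate, List.length_singleton] at hp
  obtain ⟨⟨hfirst, hzero⟩, hlast⟩ := hp
  refine ⟨p, hfirst, ?_, fun k hpk hkb => ?_⟩
  · rwa [Nat.cast_add, Nat.cast_one, add_comm (1 : ℤ)] at hlast
  · have hxk := hzero (k - p - 1).toNat (by omega)
    rwa [show p + (1 : ℕ) + (k - p - 1).toNat = k by omega] at hxk

theorem EnumeratesOnes.exists_gap_eq_of_isFactorZ {t : ℤ → ℤ} {x : ℤ → Bool}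
    (ht : EnumeratesOnes t x) {b : ℕ}
    (h : IsFactorZ ([true] ++ List.replicate b false ++ [true]) x) : ∃ m, gap t m = b + 1 := by
  obtain ⟨p, hfirst, hlast, hzero⟩ := h.exists_consecutive_ones
  simpa using ht.exists_gap_eq (by omega) hfirst hlast hzero

theorem stmt11_general (x : ℤ → Bool) (hx : memXF x) (a : ℕ)
    (hshort : IsFactorZ ([true] ++ List.replicate a false ++ [true]) x)
    (hlong : IsFactorZ ([true] ++ List.replicate (a + 1) false ++ [true]) x) :
    ∃ t : ℤ → ℤ, StrictMono t ∧ ∀ m : ℤ,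
      (t (m + 1) = t m + (a + 1) ∨ t (m + 1) = t m + (a + 2)) ∧
      x (t m) = true ∧ ∀ k : ℤ, t m < k → k < t (m + 1) → x k = false := by
  have hones : {k | x k = true}.Nontrivial := by
    obtain ⟨p, hfirst, hlast, -⟩ := hshort.exists_consecutive_ones
    exact ⟨p, hfirst, _, hlast, by omega⟩
  obtain ⟨t, ht⟩ := hx.mirrorOrdered.exists_enumeratesOnes hones
  obtain ⟨i, hi⟩ := ht.exists_gap_eq_of_isFactorZ hshort
  obtain ⟨j, hj⟩ := ht.exists_gap_eq_of_isFactorZ hlong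
  have hgaps := (ht.mirrorOrdered_gap hx.mirrorOrdered).abs_sub_le_one
    (ht.abs_gap_succ_sub_gap_le_one hx.mirrorOrdered)
  refine ⟨t, ht.strictMono, fun m => ⟨?_, ht.apply_eq_true m, fun k => ht.eq_false_of_mem_gap⟩⟩
  have hi_near := abs_le.1 (hgaps m i)
  have hj_near := abs_le.1 (hgaps m j)
  rw [hi, gap] at hi_near
  rw [hj, gap] at hj_near
  push_cast at hj_near
  omega

theorem stmt11 (x : ℤ → Bool) (hx : memXF x) (a : ℕ) (ha : 1 ≤ a)
    (hfac : IsFactorZ ([true] ++ List.replicate a false ++ [true] ++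
        List.replicate (a + 1) false ++ [true]) x ∨
      IsFactorZ ([true] ++ List.replicate (a + 1) false ++ [true] ++
        List.replicate a false ++ [true]) x) :
    ∃ t : ℤ → ℤ, StrictMono t ∧ ∀ m : ℤ,
      (t (m + 1) = t m + (a + 1) ∨ t (m + 1) = t m + (a + 2)) ∧
      x (t m) = true ∧ ∀ k : ℤ, t m < k → k < t (m + 1) → x k = false := by
  rcases hfac with h | h
  · exact stmt11_general x hx a (h.of_isInfix ⟨[], List.replicate (a + 1) false ++ [true], by simp⟩)
      (h.of_isInfix ⟨[true] ++ List.replicate a false, [], by simp⟩)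
  · exact stmt11_general x hx a (h.of_isInfix ⟨[true] ++ List.replicate (a + 1) false, [], by simp⟩)
      (h.of_isInfix ⟨[], List.replicate a false ++ [true], by simp⟩)
end

section
/- Y_F is exactly the set of balanced right-infinite words over 𝒜 = {0,1}: a right-infinite word y ∈ 𝒜^ℕ has no factor in F if and only if y is balanced. -/
/-!
Avoiding `F` is a Markoff-type condition: around an occurrence of `ab` with `a ≠ b`, compare the
word read leftwards with the word read rightwards; if the left letter at the first mismatch is `a`,
a word of `F` appears.

A balanced word avoids `F`, since `0v0` and `1ṽ1` have equal length and weights differing by two.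
Conversely, take an imbalance of least length `p`, say `1w1` at `i` and `0w0` at `j`, and, among
those, one with `|j - i|` least; exchanging the two letters, we may assume `i < j`. Minimality of
`p` makes `w` a palindrome, and minimality of the distance makes all the windows strictly between
`i` and `j` have the same weight, so that `y` has period `p` there. Read leftwards from the centre
`10` at `j - 1`, the word `L` is thus `p`-periodic until it reaches the letter `1` at `i`, where the
period breaks. The Markoff condition at the centre `10` says that the word `R` read rightwards has a
`1` wherever `L` does; that at the centre `01` at `j + p - 1`, translated by the period, says that
`R` has a `0` wherever `L` does. At the position of `i` the two demands contradict each other.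
-/

section Window

variable {α : Type*}

/-- The word `y a, y (a + 1), …, y (a + l - 1)` of length `l` read in `y` from position `a`. -/
def window (y : ℕ → α) (a l : ℕ) : List α :=
  (List.range' a l).map y

theorem length_window (y : ℕ → α) (a l : ℕ) : (window y a l).length = l := by
  simp [window]

theorem window_one (y : ℕ → α) (a : ℕ) : window y a 1 = [y a] := rfl

theorem window_add (y : ℕ → α) (a l m : ℕ) :
    window y a (l + m) = window y a l ++ window y (a + l) m := by
  simp [window, ← List.map_append]

theorem reverse_window_eq_window {y : ℕ → α} {a b l : ℕ}
    (h : ∀ s t, s + t + 1 = l → y (a + s) = y (b + t)) :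
    (window y a l).reverse = window y b l := by
  refine List.ext_getElem (by simp [window]) fun t ht _ => ?_
  have htl : t < l := by simpa [window] using ht
  simpa [window] using h (l - 1 - t) t (by omega)

end Window

theorem isFactorN_iff_exists_window_eq {u : List Bool} {y : ℕ → Bool} :
    IsFactorN u y ↔ ∃ a, window y a u.length = u := by
  refine exists_congr fun a => ⟨fun h => ?_, fun h k hk => ?_⟩
  · refine List.ext_getElem (length_window y a _) fun k _ hk => ?_
    simpa [window, hk] using h k hk
  · rw [List.getD_eq_getElem _ _ hk]
    simp [← List.getElem_of_eq h (by simpa [length_window] using hk), window]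

theorem isFactorN_window (y : ℕ → Bool) (a l : ℕ) : IsFactorN (window y a l) y :=
  isFactorN_iff_exists_window_eq.2 ⟨a, by rw [length_window]⟩

theorem IsFactorN.of_append {u v : List Bool} {y : ℕ → Bool} (h : IsFactorN (u ++ v) y) :
    IsFactorN u y ∧ IsFactorN v y := by
  obtain ⟨a, ha⟩ := isFactorN_iff_exists_window_eq.1 h
  rw [List.length_append, window_add] at ha
  obtain ⟨hu, hv⟩ := List.append_inj ha (length_window y a _)
  exact ⟨isFactorN_iff_exists_window_eq.2 ⟨_, hu⟩, isFactorN_iff_exists_window_eq.2 ⟨_, hv⟩⟩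

theorem boolToNat_injective : Function.Injective Bool.toNat :=
  Function.LeftInverse.injective Bool.ofNat_toNat

section Ones

/-- The weight (number of letters `1`) of the window of length `l` at position `a`. -/
def ones (y : ℕ → Bool) (a l : ℕ) : ℕ :=
  (window y a l).count true

variable (y : ℕ → Bool) (a l m : ℕ)

theorem ones_zero : ones y a 0 = 0 := rfl

theorem ones_one : ones y a 1 = (y a).toNat := by
  cases h : y a <;> simp [ones, window_one, h]

theorem ones_add : ones y a (l + m) = ones y a l + ones y (a + l) m := by
  simp [ones, window_add]

theorem ones_succ : ones y a (l + 1) = ones y a l + (y (a + l)).toNat := by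
  rw [ones_add, ones_one]

theorem ones_succ' : ones y a (l + 1) = (y a).toNat + ones y (a + 1) l := by
  rw [add_comm l, ones_add, ones_one]

theorem ones_shift : ones y (a + 1) l + (y a).toNat = ones y a l + (y (a + l)).toNat := by
  rw [← ones_succ, ones_succ', add_comm]

theorem ones_not_add_ones : ones (fun t => !y t) a l + ones y a l = l := by
  induction l with
  | zero => simp [ones_zero]
  | succ l ih => cases h : y (a + l) <;> simp [ones_succ, h] <;> omega

variable {y a l}

theorem eq_true_and_eq_false_of_ones_shift_lt (h : ones y (a + 1) l < ones y a l) :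
    y a = true ∧ y (a + l) = false := by
  have hshift := ones_shift y a l
  have := Bool.toNat_le (y a)
  exact ⟨Bool.toNat_eq_one.1 (by omega), Bool.toNat_eq_zero.1 (by omega)⟩

theorem ones_not_le_iff {b : ℕ} :
    ones (fun t => !y t) a l ≤ ones (fun t => !y t) b l + 1 ↔ ones y b l ≤ ones y a l + 1 := by
  have ha := ones_not_add_ones y a l
  have hb := ones_not_add_ones y b l
  omega

theorem balancedN_iff_ones_le : BalancedN y ↔ ∀ l a b, ones y a l ≤ ones y b l + 1 := by
  constructor
  · intro h l a b
    have hab := h _ _ (isFactorN_window y a l) (isFactorN_window y b l) (by simp [length_window])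
    have := (abs_le.1 hab).2
    simp only [ones]
    omega
  · intro h u v hu hv huv
    obtain ⟨a, ha⟩ := isFactorN_iff_exists_window_eq.1 hu
    obtain ⟨b, hb⟩ := isFactorN_iff_exists_window_eq.1 hv
    have hab := h u.length a b
    have hba := h u.length b a
    simp only [ones, ha] at hab hba
    rw [huv, hb] at hab hba
    rw [abs_le]
    omega

end Ones

/-- The word `bvbcṽc`, where `c` is the letter other than `b`. It is `forbidden1 v` for `b = 0` and
`forbidden2 v` for `b = 1`. -/
def forbiddenWord (b : Bool) (v : List Bool) : List Bool :=
  [b] ++ v ++ [b, !b] ++ v.reverse ++ [!b]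

theorem memYF_iff_forall_forbiddenWord {y : ℕ → Bool} :
    memYF y ↔ ∀ b v, ¬ IsFactorN (forbiddenWord b v) y := by
  rw [Bool.forall_bool]
  exact forall_and

theorem count_true_singleton_append_append_singleton (b : Bool) (v : List Bool) :
    ([b] ++ v ++ [b]).count true = v.count true + 2 * b.toNat := by
  cases b <;> simp

theorem BalancedN.memYF {y : ℕ → Bool} (h : BalancedN y) : memYF y := by
  rw [memYF_iff_forall_forbiddenWord]
  intro b v hbv
  have hsplit : forbiddenWord b v = ([b] ++ v ++ [b]) ++ ([!b] ++ v.reverse ++ [!b]) := by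
    simp [forbiddenWord]
  rw [hsplit] at hbv
  obtain ⟨hleft, hright⟩ := hbv.of_append
  have hcount := abs_le.1 (h _ _ hleft hright (by simp))
  simp only [count_true_singleton_append_append_singleton, List.count_reverse] at hcount
  cases b <;> simp only [Bool.not_false, Bool.not_true, Bool.toNat_false, Bool.toNat_true] at hcount
    <;> omega

/-- Markoff's condition on a one-sided word: around the centre `y (c - 1) ≠ y c`, if the words read
leftwards from `c - 2` and rightwards from `c + 1` agree on their first `k` letters and the next
letter on the left is `y (c - 1)`, then so is the next letter on the right. The bound `k + 2 ≤ c`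
keeps the truncated subtractions exact. -/
def Markoff (y : ℕ → Bool) : Prop :=
  ∀ c k, k + 2 ≤ c → y (c - 1) ≠ y c → (∀ t < k, y (c - 2 - t) = y (c + 1 + t)) →
    y (c - 2 - k) = y (c - 1) → y (c + 1 + k) = y (c - 1)

theorem window_eq_forbiddenWord {y : ℕ → Bool} {a k : ℕ} {b : Bool} (hleft : y a = b)
    (hcentre : y (a + 1 + k) = b) (hcentre' : y (a + 1 + k + 1) = !b)
    (hmirror : (window y (a + 1) k).reverse = window y (a + 1 + k + 1 + 1) k)
    (hright : y (a + 1 + k + 1 + 1 + k) = !b) :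
    window y a (1 + k + 1 + 1 + k + 1) = forbiddenWord b (window y (a + 1) k) := by
  simp only [window_add, window_one, forbiddenWord, ← add_assoc, hleft, hcentre, hcentre', hmirror,
    hright]
  simp

theorem markoff_of_memYF {y : ℕ → Bool} (h : memYF y) : Markoff y := by
  intro c k hkc hcentre hagree hleft
  by_contra hright
  obtain ⟨a, rfl⟩ := Nat.exists_eq_add_of_le' hkc
  have hcentre_pos : a + (k + 2) - 1 = a + 1 + k := by omega
  have hmirror : (window y (a + 1) k).reverse = window y (a + 1 + k + 1 + 1) k := by
    refine reverse_window_eq_window fun s t hst => ?_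
    convert hagree t (by omega) using 2 <;> omega
  rw [hcentre_pos] at hcentre hleft hright
  rw [show a + (k + 2) - 2 - k = a by omega] at hleft
  rw [show a + (k + 2) = a + 1 + k + 1 by omega] at hcentre hright
  have hforbidden := window_eq_forbiddenWord hleft rfl (Bool.eq_not.2 hcentre.symm) hmirror
    (Bool.eq_not.2 hright)
  exact memYF_iff_forall_forbiddenWord.1 h _ _ (hforbidden ▸ isFactorN_window y a _)

theorem Markoff.not {y : ℕ → Bool} (h : Markoff y) : Markoff fun t => !y t := by
  simpa [Markoff] using h

/-- An imbalance of least length `p` in `y`, with the heavy window at `i` to the left of the light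
one at `j`, at least distance among all such pairs of windows of length `p`. -/
structure IsMinimalImbalance (y : ℕ → Bool) (p i j : ℕ) : Prop where
  le : i ≤ j
  ones_add_one_lt : ones y j p + 1 < ones y i p
  balanced_of_lt : ∀ l < p, ∀ a b, ones y a l ≤ ones y b l + 1
  balanced_of_close : ∀ a b, a ≤ b → b + i < j + a → ones y a p ≤ ones y b p + 1

theorem exists_isMinimalImbalance {y : ℕ → Bool} {p a b : ℕ}
    (hlt : ∀ l < p, ∀ a b, ones y a l ≤ ones y b l + 1) (hab : a ≤ b)
    (hones : ¬ ones y a p ≤ ones y b p + 1) : ∃ i j, IsMinimalImbalance y p i j := by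
  classical
  have hex : ∃ d i, ones y (i + d) p + 1 < ones y i p :=
    ⟨b - a, a, by rwa [Nat.add_sub_cancel' hab, ← not_le]⟩
  obtain ⟨i, hi⟩ := Nat.find_spec hex
  refine ⟨i, i + Nat.find hex, Nat.le_add_right _ _, hi, hlt, fun a b hab hclose => ?_⟩
  obtain ⟨e, rfl⟩ := Nat.exists_eq_add_of_le hab
  exact not_lt.1 fun he => Nat.find_min hex (m := e) (by omega) ⟨a, he⟩

namespace IsMinimalImbalance

variable {y : ℕ → Bool} {p i j : ℕ}

theorem two_le_length (h : IsMinimalImbalance y p i j) : 2 ≤ p := by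
  have hones := h.ones_add_one_lt
  by_contra! hp
  interval_cases p
  · simp [ones_zero] at hones
  · have := Bool.toNat_le (y i)
    simp only [ones_one] at hones
    omega

theorem ones_eq_prefix (h : IsMinimalImbalance y p i j) {l m : ℕ} (hl : 0 < l) (hm : 0 < m)
    (hlm : l + m = p) : ones y i l = ones y j l + 1 := by
  have hones := h.ones_add_one_lt
  rw [← hlm, ones_add, ones_add] at hones
  have := h.balanced_of_lt l (by omega) i j
  have := h.balanced_of_lt m (by omega) (i + l) (j + l)
  omega

theorem ones_eq_suffix (h : IsMinimalImbalance y p i j) {l m : ℕ} (hl : 0 < l) (hm : 0 < m)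
    (hlm : l + m = p) : ones y i l = ones y (j + m) l + 1 := by
  have hones := h.ones_add_one_lt
  rw [← hlm, ones_add y i, add_comm l, ones_add] at hones
  have := h.balanced_of_lt l (by omega) i (j + m)
  have := h.balanced_of_lt m (by omega) (i + l) j
  omega

theorem apply_right_eq_false (h : IsMinimalImbalance y p i j) : y j = false := by
  have hp := h.two_le_length
  have hones := h.ones_eq_prefix (l := 1) (m := p - 1) (by omega) (by omega) (by omega)
  have := Bool.toNat_le (y i)
  rw [ones_one, ones_one] at hones
  exact Bool.toNat_eq_zero.1 (by omega)

theorem apply_left_add_eq (h : IsMinimalImbalance y p i j) {s : ℕ} (hs : 0 < s) (hsp : s + 1 < p) :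
    y (i + s) = y (j + s) := by
  have hshort := h.ones_eq_prefix (l := s) (m := p - s) hs (by omega) (by omega)
  have hlong := h.ones_eq_prefix (l := s + 1) (m := p - s - 1) (by omega) (by omega) (by omega)
  rw [ones_succ, ones_succ] at hlong
  exact boolToNat_injective (by omega)

theorem apply_left_add_eq_mirror (h : IsMinimalImbalance y p i j) {s t : ℕ} (hs : 0 < s)
    (ht : 0 < t) (hst : s + t + 1 = p) : y (i + s) = y (j + t) := by
  have hshort := h.ones_eq_suffix (l := s) (m := t + 1) hs (by omega) (by omega)
  have hlong := h.ones_eq_suffix (l := s + 1) (m := t) (by omega) ht (by omega)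
  rw [ones_succ, ones_succ', add_assoc j] at hlong
  exact boolToNat_injective (by omega)

theorem apply_right_add_eq_mirror (h : IsMinimalImbalance y p i j) {s t : ℕ} (hs : 0 < s)
    (ht : 0 < t) (hst : s + t + 1 = p) : y (j + s) = y (j + t) := by
  rw [← h.apply_left_add_eq hs (by omega), h.apply_left_add_eq_mirror hs ht hst]

theorem add_two_le (h : IsMinimalImbalance y p i j) : i + 2 ≤ j := by
  have hones := h.ones_add_one_lt
  have hij := h.le
  have hne : j ≠ i := by
    rintro rfl
    omega
  have hne_succ : j ≠ i + 1 := by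
    rintro rfl
    have := ones_shift y i p
    have := Bool.toNat_le (y i)
    omega
  omega

theorem ones_eq_of_between (h : IsMinimalImbalance y p i j) {t : ℕ} (hit : i < t) (htj : t < j) :
    ones y t p = ones y j p + 1 := by
  have hones := h.ones_add_one_lt
  have := h.balanced_of_close i t hit.le (by omega)
  have := h.balanced_of_close t j htj.le (by omega)
  omega

theorem periodic (h : IsMinimalImbalance y p i j) {t : ℕ} (hit : i < t) (htj : t + 1 < j) :
    y (t + p) = y t := by
  have hshift := ones_shift y t p
  rw [h.ones_eq_of_between hit (by omega), h.ones_eq_of_between (by omega) htj] at hshift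
  exact boolToNat_injective (by omega)

theorem ones_succ_left_lt (h : IsMinimalImbalance y p i j) : ones y (i + 1) p < ones y i p := by
  have hij := h.add_two_le
  rw [h.ones_eq_of_between (by omega) (by omega)]
  exact h.ones_add_one_lt

theorem ones_lt_pred_right (h : IsMinimalImbalance y p i j) :
    ones y (j - 1 + 1) p < ones y (j - 1) p := by
  have hij := h.add_two_le
  rw [h.ones_eq_of_between (t := j - 1) (by omega) (by omega), Nat.sub_add_cancel (by omega)]
  exact Nat.lt_succ_self _

theorem apply_left_eq_true (h : IsMinimalImbalance y p i j) : y i = true :=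
  (eq_true_and_eq_false_of_ones_shift_lt h.ones_succ_left_lt).1

theorem apply_left_add_length_eq_false (h : IsMinimalImbalance y p i j) : y (i + p) = false :=
  (eq_true_and_eq_false_of_ones_shift_lt h.ones_succ_left_lt).2

theorem apply_pred_right_eq_true (h : IsMinimalImbalance y p i j) : y (j - 1) = true :=
  (eq_true_and_eq_false_of_ones_shift_lt h.ones_lt_pred_right).1

theorem apply_pred_right_add_length_eq_false (h : IsMinimalImbalance y p i j) :
    y (j - 1 + p) = false :=
  (eq_true_and_eq_false_of_ones_shift_lt h.ones_lt_pred_right).2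

theorem add_length_le (h : IsMinimalImbalance y p i j) : i + p ≤ j := by
  by_contra! hlt
  have hij := h.add_two_le
  have hmirror := h.apply_left_add_eq_mirror (s := j - 1 - i) (t := i + p - j) (by omega) (by omega)
    (by omega)
  rw [show i + (j - 1 - i) = j - 1 by omega, show j + (i + p - j) = i + p by omega,
    h.apply_pred_right_eq_true, h.apply_left_add_length_eq_false] at hmirror
  contradiction

theorem ne_add_length_succ (h : IsMinimalImbalance y p i j) : j ≠ i + p + 1 := by
  rintro rfl
  have htrue := h.apply_pred_right_eq_true
  rw [Nat.add_sub_cancel, h.apply_left_add_length_eq_false] at htrue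
  contradiction

theorem apply_sub_eq_apply_add (h : IsMinimalImbalance y p i j) {t : ℕ} (ht : t + 2 < p) :
    y (j - 2 - t) = y (j + 1 + t) := by
  have hij := h.add_length_le
  calc y (j - 2 - t) = y (j - 2 - t + p) := (h.periodic (by omega) (by omega)).symm
    _ = y (j + (p - 2 - t)) := by congr 1; omega
    _ = y (j + (1 + t)) := h.apply_right_add_eq_mirror (by omega) (by omega) (by omega)
    _ = y (j + 1 + t) := by rw [add_assoc]

end IsMinimalImbalance

namespace Markoff

variable {y : ℕ → Bool} {p i j : ℕ}

theorem apply_add_eq_true_of_apply_sub (hy : Markoff y) (h : IsMinimalImbalance y p i j) {k : ℕ}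
    (hk : k + 2 ≤ j) (hagree : ∀ t < k, y (j - 2 - t) = y (j + 1 + t))
    (hleft : y (j - 2 - k) = true) : y (j + 1 + k) = true := by
  have hcentre := h.apply_pred_right_eq_true
  have hne : y (j - 1) ≠ y j := by simp [hcentre, h.apply_right_eq_false]
  rw [hy j k hk hne hagree (by rw [hleft, hcentre]), hcentre]

theorem add_length_add_two_le (hy : Markoff y) (h : IsMinimalImbalance y p i j) :
    i + p + 2 ≤ j := by
  have hp := h.two_le_length
  have hle := h.add_length_le
  have hne_succ := h.ne_add_length_succ
  suffices j ≠ i + p by omega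
  intro hj
  have htrue := hy.apply_add_eq_true_of_apply_sub h (k := p - 2) (by omega)
    (fun t ht => h.apply_sub_eq_apply_add (by omega))
    (by rw [show j - 2 - (p - 2) = i by omega, h.apply_left_eq_true])
  rw [show j + 1 + (p - 2) = j - 1 + p by omega, h.apply_pred_right_add_length_eq_false] at htrue
  contradiction

theorem apply_sub_eq_apply_add_of_lt_length (hy : Markoff y) (h : IsMinimalImbalance y p i j)
    {t : ℕ} (ht : t < p) : y (j - 2 - t) = y (j + 1 + t) := by
  have hp := h.two_le_length
  have hij := hy.add_length_add_two_le h
  have hpenultimate : y (j - 2 - (p - 2)) = y (j + 1 + (p - 2)) := by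
    rw [← h.periodic (by omega) (by omega), show j - 2 - (p - 2) + p = j by omega,
      h.apply_right_eq_false, show j + 1 + (p - 2) = j - 1 + p by omega,
      h.apply_pred_right_add_length_eq_false]
  have hagree : ∀ t < p - 1, y (j - 2 - t) = y (j + 1 + t) := by
    intro t ht
    obtain ht | rfl : t + 2 < p ∨ t = p - 2 := by omega
    exacts [h.apply_sub_eq_apply_add ht, hpenultimate]
  obtain ht | rfl : t < p - 1 ∨ t = p - 1 := by omega
  · exact hagree t ht
  have hleft : y (j - 2 - (p - 1)) = true := by
    rw [← h.periodic (by omega) (by omega), show j - 2 - (p - 1) + p = j - 1 by omega,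
      h.apply_pred_right_eq_true]
  rw [hleft, hy.apply_add_eq_true_of_apply_sub h (by omega) hagree hleft]

theorem apply_right_add_length_eq_true (hy : Markoff y) (h : IsMinimalImbalance y p i j) :
    y (j + p) = true := by
  have hp := h.two_le_length
  have hij := hy.add_length_add_two_le h
  calc y (j + p) = y (j + 1 + (p - 1)) := by congr 1; omega
    _ = y (j - 2 - (p - 1)) := (hy.apply_sub_eq_apply_add_of_lt_length h (by omega)).symm
    _ = y (j - 2 - (p - 1) + p) := (h.periodic (by omega) (by omega)).symm
    _ = y (j - 1) := by congr 1; omega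
    _ = true := h.apply_pred_right_eq_true

theorem apply_add_eq_false_of_apply_sub (hy : Markoff y) (h : IsMinimalImbalance y p i j) {k : ℕ}
    (hk : i + k + 2 < j) (hagree : ∀ t < k, y (j - 2 - t) = y (j + 1 + (t + p)))
    (hleft : y (j - 2 - k) = false) : y (j + 1 + (k + p)) = false := by
  have hcentre : y (j + p - 1) = false := by
    rw [Nat.sub_add_comm (by omega), h.apply_pred_right_add_length_eq_false]
  have hshift : ∀ t ≤ k, y (j + p - 2 - t) = y (j - 2 - t) := by
    intro t ht
    rw [← h.periodic (t := j - 2 - t) (by omega) (by omega)]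
    congr 1
    omega
  have hmove (t : ℕ) : j + p + 1 + t = j + 1 + (t + p) := by omega
  have hright := hy (j + p) k (by omega) (by simp [hcentre, hy.apply_right_add_length_eq_true h])
    (fun t ht => by rw [hshift t ht.le, hagree t ht, hmove])
    (by rw [hshift k le_rfl, hleft, hcentre])
  rwa [hmove, hcentre] at hright

end Markoff

theorem false_of_periodic_break {L R : ℕ → Bool} {p q : ℕ}
    (hper : ∀ t < q, L (t + p) = L t) (hinit : ∀ t < p, L t = R t)
    (hone : ∀ k ≤ q + p, (∀ t < k, L t = R t) → L k = true → R k = true)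
    (hzero : ∀ k ≤ q, (∀ t < k, L t = R (t + p)) → L k = false → R (k + p) = false)
    (hbreak : L q = false) (hbreak' : L (q + p) = true) : False := by
  have hshift {k : ℕ} (hk : k ≤ q) (hagree : ∀ t < k + p, L t = R t) (t : ℕ) (ht : t < k) :
      L t = R (t + p) := by
    rw [← hper t (by omega), hagree (t + p) (by omega)]
  have hagree : ∀ k < q + p, L k = R k := by
    intro k
    induction k using Nat.strong_induction_on with
    | _ k ih =>
      intro hk
      have hlt : ∀ t < k, L t = R t := fun t ht => ih t ht (by omega)
      obtain hkp | hpk := lt_or_ge k p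
      · exact hinit k hkp
      cases hL : L k with
      | true => rw [hone k hk.le hlt hL]
      | false =>
        obtain ⟨s, rfl⟩ := Nat.exists_eq_add_of_le' hpk
        rw [hzero s (by omega) (hshift (by omega) hlt) (by rw [← hper s (by omega), hL])]
  have htrue := hone (q + p) le_rfl hagree hbreak'
  rw [hzero q le_rfl (hshift le_rfl hagree) hbreak] at htrue
  contradiction

theorem Markoff.not_isMinimalImbalance {y : ℕ → Bool} {p i j : ℕ} (hy : Markoff y) :
    ¬ IsMinimalImbalance y p i j := by
  intro h
  have hp := h.two_le_length
  have hij := hy.add_length_add_two_le h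
  refine false_of_periodic_break (L := fun t => y (j - 2 - t)) (R := fun t => y (j + 1 + t))
    (p := p) (q := j - 2 - p - i) (fun t ht => ?_)
    (fun t ht => hy.apply_sub_eq_apply_add_of_lt_length h ht)
    (fun k hk => hy.apply_add_eq_true_of_apply_sub h (by omega))
    (fun k hk => hy.apply_add_eq_false_of_apply_sub h (by omega)) ?_ ?_
  · rw [← h.periodic (by omega) (by omega), show j - 2 - (t + p) + p = j - 2 - t by omega]
  · simp only [show j - 2 - (j - 2 - p - i) = i + p by omega, h.apply_left_add_length_eq_false]
  · simp only [show j - 2 - (j - 2 - p - i + p) = i by omega, h.apply_left_eq_true]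

theorem Markoff.ones_le {y : ℕ → Bool} (hy : Markoff y) (l a b : ℕ) :
    ones y a l ≤ ones y b l + 1 := by
  induction l using Nat.strong_induction_on generalizing a b with
  | _ l ih =>
    by_contra hones
    obtain hab | hba := le_total a b
    · obtain ⟨i, j, hij⟩ := exists_isMinimalImbalance ih hab hones
      exact hy.not_isMinimalImbalance hij
    · obtain ⟨i, j, hij⟩ := exists_isMinimalImbalance
        (fun m hm a b => ones_not_le_iff.2 (ih m hm b a)) hba (ones_not_le_iff.not.2 hones)
      exact hy.not.not_isMinimalImbalance hij

theorem stmt15 (y : ℕ → Bool) : memYF y ↔ BalancedN y :=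
  ⟨fun h => balancedN_iff_ones_le.2 (markoff_of_memYF h).ones_le, BalancedN.memYF⟩
end
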